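/- Let 0 ≤ γ < 1 and let a_1, …, a_T be nonnegative real numbers. Then Σ_{t=1}^T (1/√t) Σ_{j=1}^t γ^{t−j} a_j ≤ (1/(1−γ)) Σ_{t=1}^T a_t/√t. -/

import Mathlib

/-!
Exchanging the two sums, the coefficient of `a j` on the left is `∑_{t=j}^T γ^(t-j) / √t`. As
`1 / √t ≤ 1 / √j` for `t ≥ j`, it is at most `1 / √j` times a geometric sum, hence at most
`(1 / √j) / (1 - γ)`. All that is used of `1 / √t` is that it is nonnegative and antitone, and of
`γ^n` that it is nonnegative with partial sums bounded by `1 / (1 - γ)`.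
-/

open Finset

section ConvolutionKernel

variable {R : Type*} [CommSemiring R] [PartialOrder R] [IsOrderedRing R] {k w : ℕ → R} {C : R}

theorem sum_Icc_mul_sub_le_of_le_left {j T : ℕ} (hk : ∀ n, 0 ≤ k n)
    (hkC : ∀ n, ∑ i ∈ range n, k i ≤ C) (hwj : 0 ≤ w j) (hw : ∀ t ∈ Icc j T, w t ≤ w j) :
    ∑ t ∈ Icc j T, w t * k (t - j) ≤ C * w j :=
  calc ∑ t ∈ Icc j T, w t * k (t - j)
    _ ≤ ∑ t ∈ Icc j T, w j * k (t - j) :=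
      sum_le_sum fun t ht => mul_le_mul_of_nonneg_right (hw t ht) (hk _)
    _ = (∑ i ∈ range (T + 1 - j), k i) * w j := by
      rw [← mul_sum, ← Ico_add_one_right_eq_Icc, sum_Ico_eq_sum_range, mul_comm]
      simp only [Nat.add_sub_cancel_left]
    _ ≤ C * w j := mul_le_mul_of_nonneg_right (hkC _) hwj

theorem sum_Icc_mul_sum_Icc_sub_mul_le_of_antitoneOn {m T : ℕ} {a : ℕ → R}
    (hk : ∀ n, 0 ≤ k n) (hkC : ∀ n, ∑ i ∈ range n, k i ≤ C)
    (hw : AntitoneOn w (Icc m T)) (hw0 : ∀ t ∈ Icc m T, 0 ≤ w t) (ha : ∀ t ∈ Icc m T, 0 ≤ a t) :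
    ∑ t ∈ Icc m T, w t * ∑ j ∈ Icc m t, k (t - j) * a j ≤ C * ∑ t ∈ Icc m T, a t * w t := by
  have sum_swap : ∑ t ∈ Icc m T, w t * ∑ j ∈ Icc m t, k (t - j) * a j
      = ∑ j ∈ Icc m T, a j * ∑ t ∈ Icc j T, w t * k (t - j) := by
    simp only [mul_sum]
    rw [sum_comm' (t' := Icc m T) (s' := fun j => Icc j T) (by simp only [mem_Icc]; lia)]
    exact sum_congr rfl fun j _ => sum_congr rfl fun t _ => by ring
  have weight_le {j : ℕ} (hj : j ∈ Icc m T) : ∀ t ∈ Icc j T, w t ≤ w j := fun t ht =>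
    hw (mem_coe.2 hj) (mem_coe.2 (Icc_subset_Icc_left (mem_Icc.1 hj).1 ht)) (mem_Icc.1 ht).1
  calc ∑ t ∈ Icc m T, w t * ∑ j ∈ Icc m t, k (t - j) * a j
    _ = ∑ j ∈ Icc m T, a j * ∑ t ∈ Icc j T, w t * k (t - j) := sum_swap
    _ ≤ ∑ j ∈ Icc m T, a j * (C * w j) := sum_le_sum fun j hj =>
      mul_le_mul_of_nonneg_left
        (sum_Icc_mul_sub_le_of_le_left hk hkC (hw0 j hj) (weight_le hj)) (ha j hj)
    _ = C * ∑ t ∈ Icc m T, a t * w t := by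
      rw [mul_sum]
      exact sum_congr rfl fun j _ => mul_left_comm _ _ _

end ConvolutionKernel

theorem geom_sum_le_one_div_one_sub {K : Type*} [Field K] [LinearOrder K] [IsStrictOrderedRing K]
    {x : K} (hx0 : 0 ≤ x) (hx1 : x < 1) (n : ℕ) : ∑ i ∈ range n, x ^ i ≤ 1 / (1 - x) := by
  simpa only [range_eq_Ico, pow_zero] using geom_sum_Ico_le_of_lt_one (m := 0) (n := n) hx0 hx1

theorem antitoneOn_one_div_sqrt_natCast : AntitoneOn (fun t : ℕ => 1 / √(t : ℝ)) (Set.Ici 1) :=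
  fun _ hs _ _ hst => one_div_le_one_div_of_le (Real.sqrt_pos.2 (Nat.cast_pos.2 hs))
    (Real.sqrt_le_sqrt (Nat.cast_le.2 hst))

/-- For `0 ≤ γ < 1` and nonnegative reals `a 1, …, a T`,
`Σ_{t=1}^T (1/√t) Σ_{j=1}^t γ^(t−j) a j ≤ (1/(1−γ)) Σ_{t=1}^T a t / √t`. -/
theorem sum_geometric_weighted_inv_sqrt_le
    (γ : ℝ) (hγ0 : 0 ≤ γ) (hγ1 : γ < 1) (T : ℕ) (a : ℕ → ℝ)
    (ha : ∀ t ∈ Finset.Icc 1 T, 0 ≤ a t) :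
    ∑ t ∈ Finset.Icc 1 T, (1 / Real.sqrt t) * ∑ j ∈ Finset.Icc 1 t, γ ^ (t - j) * a j
      ≤ (1 / (1 - γ)) * ∑ t ∈ Finset.Icc 1 T, a t / Real.sqrt t := by
  have inv_sqrt_antitoneOn : AntitoneOn (fun t : ℕ => 1 / √(t : ℝ)) (Icc 1 T) :=
    antitoneOn_one_div_sqrt_natCast.mono fun _ ht => (mem_Icc.1 (mem_coe.1 ht)).1
  simp only [div_eq_mul_one_div (a _)]
  exact sum_Icc_mul_sum_Icc_sub_mul_le_of_antitoneOn (pow_nonneg hγ0)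
    (geom_sum_le_one_div_one_sub hγ0 hγ1) inv_sqrt_antitoneOn (fun _ _ => by positivity) ha
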